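/- Let K be a SET graph on n vertices and u any vertex of K. Then K admits a path decomposition D with D(u) ≥ 2 and |D| ≤ ⌈n/2⌉. -/

import Mathlib

open SimpleGraph

variable {V : Type*}

/-- A path decomposition of a simple graph `G`: a list of nontrivial paths of `G`
that are pairwise edge-disjoint and together cover every edge of `G`. -/
structure PathDecomp (G : SimpleGraph V) where
  paths : List (Σ a b : V, G.Walk a b)
  nontrivial : ∀ p ∈ paths, 0 < p.2.2.length
  isPath : ∀ p ∈ paths, p.2.2.IsPath
  edgeDisjoint : paths.Pairwise fun p q => ∀ e, e ∈ p.2.2.edges → e ∉ q.2.2.edges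
  covers : ∀ e ∈ G.edgeSet, ∃ p ∈ paths, e ∈ p.2.2.edges

/-- Cardinality of a path decomposition. -/
def pdCard {G : SimpleGraph V} (D : PathDecomp G) : ℕ := D.paths.length

/-- `ends D u` is the number of paths in `D` having `u` as an end vertex. -/
def ends [DecidableEq V] {G : SimpleGraph V} (D : PathDecomp G) (u : V) : ℕ :=
  (D.paths.filter fun p => p.1 = u ∨ p.2.1 = u).length

/-- The path number: minimum cardinality of a path decomposition. -/
noncomputable def pn (G : SimpleGraph V) : ℕ :=
  sInf {n | ∃ D : PathDecomp G, pdCard D = n}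

/-- Degree as the `ncard` of the neighbor set (no decidability needed). -/
noncomputable def ndeg (G : SimpleGraph V) (v : V) : ℕ := {w | G.Adj v w}.ncard

/-- A SET graph: the set of even-degree vertices consists of exactly three
mutually adjacent vertices, and every odd-degree vertex has at least two
even-degree neighbors. -/
def IsSETGraph (G : SimpleGraph V) : Prop :=
  (∃ a b c : V, a ≠ b ∧ a ≠ c ∧ b ≠ c ∧
      {v : V | Even (ndeg G v)} = {a, b, c} ∧
      G.Adj a b ∧ G.Adj a c ∧ G.Adj b c) ∧
  ∀ v : V, Odd (ndeg G v) →
    ∃ w₁ w₂ : V, w₁ ≠ w₂ ∧ G.Adj v w₁ ∧ G.Adj v w₂ ∧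
      Even (ndeg G w₁) ∧ Even (ndeg G w₂)


/-!
An edge `ab` missing from a path decomposition can be inserted without a new path whenever a path
ends at `b`: if this path avoids `a`, append the edge; otherwise the path `b … c a …` becomes
`c … b a …`, which has taken in `ab` and released `ac`, while the path end at `b` has moved to `c`.
Counting shows that, among the missing edges at `a`, this switching terminates for at least one of
them (G. Fan). By induction on the number of edges, a graph on `n` vertices with exactly one even
vertex therefore decomposes into `(n - 1) / 2` paths with one end at each odd vertex.

Given `u`, delete edges from `u` to vertices of even degree so as to leave exactly one even vertex,
decompose the remaining graph, put all but at most one of the deleted edges back by switching, and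
let the last one form a path of its own. Every edge put back contributes one path end at `u`.
-/

/-- The graph obtained from `G` by deleting the edges between `u` and the vertices in `S`. -/
def deleteStar (G : SimpleGraph V) (u : V) (S : Finset V) : SimpleGraph V :=
  G.deleteEdges {e | ∃ v ∈ S, e = s(u, v)}

section DeleteStar

variable {G : SimpleGraph V} {u v w : V} {S : Finset V}

@[simp]
theorem deleteStar_empty : deleteStar G u ∅ = G := by simp [deleteStar]

theorem deleteStar_adj_center : (deleteStar G u S).Adj u w ↔ G.Adj u w ∧ w ∉ S := by
  simp only [deleteStar, deleteEdges_adj, Set.mem_ofPred_eq, Sym2.congr_right,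
    exists_eq_right']

theorem deleteStar_adj_of_ne (hv : v ≠ u) :
    (deleteStar G u S).Adj v w ↔ G.Adj v w ∧ (v ∈ S → w ≠ u) := by
  simp only [deleteStar, deleteEdges_adj, Set.mem_ofPred_eq, Sym2.eq_iff]
  aesop

theorem deleteStar_lt (hv : v ∈ S) (huv : G.Adj u v) : deleteStar G u S < G :=
  lt_of_le_of_ne (deleteEdges_le _) fun h =>
    (deleteStar_adj_center.1 (h.symm ▸ huv : (deleteStar G u S).Adj u v)).2 hv

theorem mem_edgeSet_deleteStar_erase [DecidableEq V] (hv : v ∈ S) (huv : G.Adj u v)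
    {e : Sym2 V} :
    e ∈ (deleteStar G u (S.erase v)).edgeSet ↔ e = s(u, v) ∨ e ∈ (deleteStar G u S).edgeSet := by
  by_cases he : e = s(u, v)
  · simp [he, deleteStar_adj_center, huv]
  · simp only [deleteStar, edgeSet_deleteEdges, Set.mem_sdiff, Set.mem_ofPred_eq, he, false_or]
    refine and_congr_right fun _ => not_congr (exists_congr fun w => ?_)
    rw [Finset.mem_erase, and_assoc, and_iff_right_iff_imp]
    rintro ⟨-, rfl⟩ rfl
    exact he rfl

theorem ndeg_pos_iff [Finite V] : 0 < ndeg G v ↔ ∃ w, G.Adj v w := Set.ncard_pos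

theorem ndeg_deleteStar_center [Finite V] (hS : ∀ v ∈ S, G.Adj u v) :
    ndeg (deleteStar G u S) u + S.card = ndeg G u := by
  simp only [ndeg, deleteStar_adj_center, ← Set.ncard_coe_finset S]
  exact Set.ncard_sdiff_add_ncard_of_subset hS

theorem ndeg_deleteStar_of_ne [Finite V] [DecidableEq V] (hS : ∀ v ∈ S, G.Adj u v)
    (hv : v ≠ u) : ndeg (deleteStar G u S) v + (if v ∈ S then 1 else 0) = ndeg G v := by
  simp only [ndeg, deleteStar_adj_of_ne hv]
  split_ifs with hvS
  · simp only [hvS, forall_const]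
    exact Set.ncard_sdiff_singleton_add_one (s := {w | G.Adj v w}) (hS v hvS).symm
  · simp [hvS]

theorem even_ndeg_deleteStar_center [Finite V] (hS : ∀ v ∈ S, G.Adj u v) :
    Even (ndeg (deleteStar G u S) u) ↔ (Even (ndeg G u) ↔ Even S.card) := by
  rw [← ndeg_deleteStar_center hS, Nat.even_add]
  tauto

theorem even_ndeg_deleteStar_of_ne [Finite V] {E : Finset V}
    (hE : ∀ v, v ∈ E ↔ Even (ndeg G v)) (hSE : S ⊆ E) (hS : ∀ v ∈ S, G.Adj u v) (hv : v ≠ u) :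
    Even (ndeg (deleteStar G u S) v) ↔ v ∈ E ∧ v ∉ S := by
  classical
  have hvSE := @hSE v
  rw [hE, ← ndeg_deleteStar_of_ne hS hv] at *
  split_ifs at * with hvS <;> simp_all [Nat.even_add_one]

theorem odd_ndeg_deleteStar_singleton [Finite V] {h : V → ℕ} {c z : V} (hzc : G.Adj z c)
    (hc : Even (ndeg G c + h c)) (hodd : v ≠ c → Odd (ndeg G v + h v)) (hvz : v ≠ z) :
    Odd (ndeg (deleteStar G z {c}) v + h v) := by
  classical
  have hdeg := ndeg_deleteStar_of_ne (S := {c}) (by simpa) hvz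
  rcases eq_or_ne v c with rfl | hvc
  · rw [← hdeg, if_pos (Finset.mem_singleton_self v), add_right_comm, Nat.even_add_one] at hc
    exact Nat.not_even_iff_odd.1 hc
  · rw [if_neg (by simpa), add_zero] at hdeg
    exact hdeg ▸ hodd hvc

end DeleteStar

/-- The edges traversed by a list of vertices, with multiplicity. -/
def pathEdges : List V → Multiset (Sym2 V)
  | [] => 0
  | [_] => 0
  | x :: y :: l => s(x, y) ::ₘ pathEdges (y :: l)

theorem pathEdges_cons {l : List V} {x y : V} (hy : l.head? = some y) :
    pathEdges (x :: l) = s(x, y) ::ₘ pathEdges l := by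
  obtain ⟨r, rfl⟩ := List.head?_eq_some_iff.1 hy
  rfl

theorem pathEdges_append_cons {l : List V} {x : V} (hx : l.getLast? = some x) (y : V)
    (m : List V) :
    pathEdges (l ++ y :: m) = s(y, x) ::ₘ (pathEdges l + pathEdges (y :: m)) := by
  induction l with
  | nil => simp at hx
  | cons z l ih =>
    cases l with
    | nil => simp_all [pathEdges, Sym2.eq_swap]
    | cons w l =>
      simp only [List.getLast?_cons_cons, List.cons_append, pathEdges] at hx ih ⊢
      rw [ih hx, Multiset.cons_swap, Multiset.cons_add]

@[simp]
theorem pathEdges_reverse (l : List V) : pathEdges l.reverse = pathEdges l := by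
  induction l with
  | nil => rfl
  | cons x l ih =>
    cases l with
    | nil => rfl
    | cons y l =>
      rw [List.reverse_cons, pathEdges_append_cons (x := y) (by simp), ih]
      simp [pathEdges]

theorem append_cons_inj_of_nodup {l l' m m' : List V} {a : V} (hl : (l ++ a :: m).Nodup)
    (h : l ++ a :: m = l' ++ a :: m') : l = l' ∧ m = m' := by
  have hal : a ∉ l := fun ha => List.disjoint_of_nodup_append hl ha (by simp)
  have ham : a ∉ m := (List.nodup_cons.1 hl.of_append_right).1
  simpa using (List.append_cons_inj_of_notMem hal ham).1 h

section PathEnds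

variable [DecidableEq V]

/-- The number of ends of the path `p` at `v`; a trivial path has two ends at its vertex. -/
def pathEndCount (p : List V) (v : V) : ℕ :=
  (if p.head? = some v then 1 else 0) + (if p.getLast? = some v then 1 else 0)

@[simp]
theorem pathEndCount_reverse (p : List V) (v : V) :
    pathEndCount p.reverse v = pathEndCount p v := by
  simp [pathEndCount, add_comm]

theorem sum_pathEndCount [Fintype V] {p : List V} (hp : p ≠ []) :
    ∑ v, pathEndCount p v = 2 := by
  simp [pathEndCount, List.head?_eq_some_head hp, List.getLast?_eq_some_getLast hp,
    Finset.sum_add_distrib]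

end PathEnds

/-- A family of paths of a graph on `V`. A path is encoded by the list of its vertices, so that
`[v]` is the trivial path at `v`, and it is meant up to reversal. -/
abbrev PathSystem (V : Type*) := Multiset (List V)

namespace PathSystem

/-- The edges traversed by the paths of `M`, with multiplicity. -/
def edges (M : PathSystem V) : Multiset (Sym2 V) := (M.map pathEdges).sum

@[simp]
theorem edges_cons (p : List V) (M : PathSystem V) :
    edges (p ::ₘ M) = pathEdges p + M.edges := by simp [edges]

/-- The path `p`, in one of its two orientations, is a member of `M`. -/
def HasPath (M : PathSystem V) (p : List V) : Prop := p ∈ M ∨ p.reverse ∈ M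

theorem hasPath_cons {M : PathSystem V} {p q : List V} :
    HasPath (p ::ₘ M) q ↔ q = p ∨ q = p.reverse ∨ M.HasPath q := by
  simp only [HasPath, Multiset.mem_cons, List.reverse_eq_iff]
  tauto

/-- The members of `M` are paths: nonempty lists without repetition. -/
def IsSimple (M : PathSystem V) : Prop := ∀ p ∈ M, p ≠ [] ∧ p.Nodup

/-- No member of `M` is a trivial path. -/
def IsNontrivial (M : PathSystem V) : Prop := ∀ p ∈ M, 2 ≤ p.length

theorem IsSimple.nodup {M : PathSystem V} (hM : M.IsSimple) {p : List V} (hp : M.HasPath p) :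
    p.Nodup := by
  rcases hp with hp | hp
  · exact (hM _ hp).2
  · exact List.nodup_reverse.1 (hM _ hp).2

/-- `M'` arises from `M` by replacing the path `p` by `q`. -/
def Replaces (M M' : PathSystem V) (p q : List V) : Prop :=
  ∃ N, (M = p ::ₘ N ∨ M = p.reverse ::ₘ N) ∧ M' = q ::ₘ N

theorem HasPath.exists_replaces {M : PathSystem V} {p : List V} (hp : M.HasPath p)
    (q : List V) : ∃ M', M.Replaces M' p q := by
  rcases hp with hp | hp <;> obtain ⟨N, rfl⟩ := Multiset.exists_cons_of_mem hp
  exacts [⟨_, N, .inl rfl, rfl⟩, ⟨_, N, .inr rfl, rfl⟩]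

namespace Replaces

variable {M M' : PathSystem V} {p q : List V}

theorem card_eq (h : M.Replaces M' p q) : M'.card = M.card := by
  obtain ⟨N, rfl | rfl, rfl⟩ := h <;> simp

theorem edges_add (h : M.Replaces M' p q) :
    M'.edges + pathEdges p = M.edges + pathEdges q := by
  obtain ⟨N, rfl | rfl, rfl⟩ := h <;>
    simp only [edges_cons, pathEdges_reverse, add_comm, add_left_comm]

theorem isSimple (h : M.Replaces M' p q) (hq : q ≠ [] ∧ q.Nodup) (hM : M.IsSimple) :
    M'.IsSimple := by
  obtain ⟨N, rfl | rfl, rfl⟩ := h <;> simp_all [IsSimple]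

theorem isNontrivial (h : M.Replaces M' p q) (hq : p.length ≤ q.length)
    (hM : M.IsNontrivial) : M'.IsNontrivial := by
  obtain ⟨N, rfl | rfl, rfl⟩ := h <;>
    simp only [IsNontrivial, Multiset.mem_cons, forall_eq_or_imp, List.length_reverse] at hM ⊢ <;>
    exact ⟨hM.1.trans hq, hM.2⟩

theorem hasPath (h : M.Replaces M' p q) : M'.HasPath q := by
  obtain ⟨N, -, rfl⟩ := h
  exact hasPath_cons.2 (.inl rfl)

theorem hasPath_of_hasPath (h : M.Replaces M' p q) {o : List V} (ho : M.HasPath o) :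
    o = p ∨ o = p.reverse ∨ M'.HasPath o := by
  obtain ⟨N, rfl | rfl, rfl⟩ := h <;> simp only [hasPath_cons, List.reverse_reverse] at ho ⊢ <;>
    tauto

theorem hasPath_left (h : M.Replaces M' p q) : M.HasPath p := by
  obtain ⟨N, rfl | rfl, rfl⟩ := h <;> simp [hasPath_cons]

theorem hasPath_append_cons {a : V} {l m l' m' : List V} (h : M.Replaces M' (l ++ a :: m) q)
    (hM : M.IsSimple) (ho : M.HasPath (l' ++ a :: m')) :
    l' = l ∨ l' = m.reverse ∧ m' = l.reverse ∨ M'.HasPath (l' ++ a :: m') := by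
  have hnodup := hM.nodup h.hasPath_left
  rcases h.hasPath_of_hasPath ho with h | h | h
  · exact .inl (append_cons_inj_of_nodup hnodup h.symm).1.symm
  · rw [← List.nodup_reverse] at hnodup
    simp only [List.reverse_append, List.reverse_cons, List.append_assoc,
      List.singleton_append] at hnodup h
    exact .inr (.inl ((append_cons_inj_of_nodup hnodup h.symm).imp Eq.symm Eq.symm))
  · exact .inr (.inr h)

end Replaces

/-- Some path of `M` starting at `v` reaches `a` through the edge `da`. -/
def EntersVia (M : PathSystem V) (a v d : V) : Prop :=
  ∃ l m, M.HasPath (l ++ a :: m) ∧ l.head? = some v ∧ l.getLast? = some d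

/-- Some path of `M` starts at `v` and does not contain `a`. -/
def AvoidsFrom (M : PathSystem V) (a v : V) : Prop :=
  ∃ p, M.HasPath p ∧ p.head? = some v ∧ a ∉ p

theorem HasPath.pathEdges_le {M : PathSystem V} {p : List V} (hp : M.HasPath p) :
    pathEdges p ≤ M.edges := by
  rcases hp with hp | hp <;> obtain ⟨N, rfl⟩ := Multiset.exists_cons_of_mem hp <;> simp

theorem HasPath.entersVia_or_avoidsFrom {M : PathSystem V} {p : List V} {a v : V}
    (hp : M.HasPath p) (hv : p.head? = some v) (hva : v ≠ a) :
    (∃ d, M.EntersVia a v d) ∨ M.AvoidsFrom a v := by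
  by_cases ha : a ∈ p
  · obtain ⟨l, m, rfl⟩ := List.append_of_mem ha
    have hl : l ≠ [] := by rintro rfl; simp_all
    refine .inl ⟨l.getLast hl, l, m, hp, ?_, List.getLast?_eq_some_getLast hl⟩
    rwa [List.head?_append_of_ne_nil _ hl] at hv
  · exact .inr ⟨p, hp, hv, ha⟩

theorem EntersVia.edge_mem {M : PathSystem V} {a v d : V} (h : M.EntersVia a v d) :
    s(a, d) ∈ M.edges := by
  obtain ⟨l, m, hp, -, hd⟩ := h
  refine Multiset.mem_of_le hp.pathEdges_le ?_
  rw [pathEdges_append_cons hd]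
  exact Multiset.mem_cons_self _ _

theorem EntersVia.left_unique {M : PathSystem V} (hM : M.IsSimple) (hE : M.edges.Nodup)
    {a v w d : V} (hv : M.EntersVia a v d) (hw : M.EntersVia a w d) : v = w := by
  obtain ⟨l, m, hp, hlv, hld⟩ := hv
  obtain ⟨l', m', hp', hlw, hld'⟩ := hw
  obtain ⟨N, hN⟩ := hp.exists_replaces []
  rcases hN.hasPath_append_cons hM hp' with rfl | ⟨rfl, -⟩ | h
  · exact Option.some_injective _ (hlv.symm.trans hlw)
  · have hdl : d ∈ l := List.mem_of_getLast? hld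
    have hdm : d ∈ m := by simpa using List.mem_of_getLast? hld'
    exact (List.disjoint_of_nodup_append (hM.nodup hp) hdl (by simp [hdm])).elim
  · have hdN : s(a, d) ∈ N.edges := EntersVia.edge_mem ⟨l', m', h, hlw, hld'⟩
    have hdp : s(a, d) ∈ pathEdges (l ++ a :: m) := by simp [pathEdges_append_cons hld]
    have hsum : N.edges + pathEdges (l ++ a :: m) = M.edges := by
      simpa [pathEdges] using hN.edges_add
    rw [← hsum, Multiset.nodup_add] at hE
    exact (Multiset.disjoint_left.1 hE.2.2 hdN hdp).elim

/-- Augmenting chains at `a`: starting from `b`, one repeatedly passes from a path end `v` to the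
neighbour of `a` through which a path starting at `v` enters `a`, until after `n` steps one arrives
at the end of a path that does not contain `a`. -/
inductive HasChain (M : PathSystem V) (a : V) : ℕ → V → Prop
  | of_avoidsFrom {b : V} : M.AvoidsFrom a b → HasChain M a 0 b
  | of_entersVia {n : ℕ} {b c : V} : M.EntersVia a b c → HasChain M a n c → HasChain M a (n + 1) b

theorem HasChain.of_replaces_reverse {M M' : PathSystem V} (hM : M.IsSimple) {a b v : V}
    {l m : List V} (hR : M.Replaces M' (l ++ a :: m) (l.reverse ++ a :: m))
    (hlb : l.head? = some b) (hab : s(a, b) ∉ M.edges) {n : ℕ} (hv : M.HasChain a n v)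
    (hvb : v ≠ b) : M'.HasChain a n v := by
  induction hv with
  | of_avoidsFrom h =>
    obtain ⟨p, hp, hpv, hap⟩ := h
    refine .of_avoidsFrom ⟨p, ?_, hpv, hap⟩
    rcases hR.hasPath_of_hasPath hp with rfl | rfl | h
    · simp at hap
    · simp at hap
    · exact h
  | of_entersVia h _ ih =>
    refine .of_entersVia ?_ (ih fun hdb => hab (hdb ▸ h.edge_mem))
    obtain ⟨l', m', hp, hlv, hld⟩ := h
    rcases hR.hasPath_append_cons hM hp with rfl | ⟨rfl, -⟩ | h
    · exact (hvb (Option.some_injective _ (hlv.symm.trans hlb))).elim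
    · refine ⟨m.reverse, l, ?_, hlv, hld⟩
      simpa [HasPath, or_comm] using hR.hasPath
    · exact ⟨l', m', h, hlv, hld⟩

section Ends

variable [DecidableEq V]

/-- The number of path ends at `v` in `M`. -/
def endCount (M : PathSystem V) (v : V) : ℕ := (M.map fun p => pathEndCount p v).sum

@[simp]
theorem endCount_cons (p : List V) (M : PathSystem V) (v : V) :
    endCount (p ::ₘ M) v = pathEndCount p v + M.endCount v := by simp [endCount]

theorem exists_hasPath_of_endCount_pos {M : PathSystem V} {v : V} (h : 0 < M.endCount v) :
    ∃ p, M.HasPath p ∧ p.head? = some v := by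
  obtain ⟨p, hp, hpos⟩ : ∃ p ∈ M, pathEndCount p v ≠ 0 := by
    by_contra! hzero
    exact h.ne' (Multiset.sum_eq_zero fun x hx => by
      obtain ⟨p, hp, rfl⟩ := Multiset.mem_map.1 hx
      exact hzero p hp)
  by_cases hhead : p.head? = some v
  · exact ⟨p, .inl hp, hhead⟩
  · exact ⟨p.reverse, .inr (by simpa using hp), by simp_all [pathEndCount]⟩

theorem Replaces.endCount_add {M M' : PathSystem V} {p q : List V} (h : M.Replaces M' p q)
    (v : V) : M'.endCount v + pathEndCount p v = M.endCount v + pathEndCount q v := by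
  obtain ⟨N, rfl | rfl, rfl⟩ := h <;>
    simp only [endCount_cons, pathEndCount_reverse, add_comm, add_left_comm]

/-- `M'` arises from `M` by moving one path end from `b` to `a`, without changing the number of
paths and without making any path trivial. -/
structure MovesEnd (M M' : PathSystem V) (b a : V) : Prop where
  card_eq : M'.card = M.card
  isSimple : M.IsSimple → M'.IsSimple
  isNontrivial : M.IsNontrivial → M'.IsNontrivial
  endCount_add (v : V) :
    M'.endCount v + (if v = b then 1 else 0) = M.endCount v + (if v = a then 1 else 0)

theorem MovesEnd.trans {M M' M'' : PathSystem V} {a b c : V} (h : M.MovesEnd M' b c)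
    (h' : M'.MovesEnd M'' c a) : M.MovesEnd M'' b a where
  card_eq := h'.card_eq.trans h.card_eq
  isSimple hM := h'.isSimple (h.isSimple hM)
  isNontrivial hM := h'.isNontrivial (h.isNontrivial hM)
  endCount_add v := by have := h.endCount_add v; have := h'.endCount_add v; omega

theorem AvoidsFrom.exists_movesEnd {M : PathSystem V} (hM : M.IsSimple) {a b : V}
    (h : M.AvoidsFrom a b) : ∃ M', M'.edges = s(a, b) ::ₘ M.edges ∧ M.MovesEnd M' b a := by
  obtain ⟨p, hp, hpb, hap⟩ := h
  obtain ⟨M', hR⟩ := hp.exists_replaces (a :: p)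
  refine ⟨M', ?_, hR.card_eq, hR.isSimple ⟨by simp, by simp [hap, hM.nodup hp]⟩,
    hR.isNontrivial (by simp), fun v => ?_⟩
  · have := hR.edges_add
    rw [pathEdges_cons hpb, Multiset.add_cons, ← Multiset.cons_add] at this
    exact add_right_cancel this
  · have := hR.endCount_add v
    have hlast : (a :: p).getLast? = p.getLast? := by cases p <;> simp_all
    simp only [pathEndCount, hlast, hpb, List.head?_cons, Option.some.injEq,
      eq_comm (b := v)] at this
    omega

/-- A path `b … c a …` is replaced by `c … b a …`. -/
theorem Replaces.movesEnd_reverse {M M' : PathSystem V} {a b c : V} {l m : List V}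
    (hR : M.Replaces M' (l ++ a :: m) (l.reverse ++ a :: m)) (hb : l.head? = some b)
    (hc : l.getLast? = some c) :
    s(a, c) ::ₘ M'.edges = s(a, b) ::ₘ M.edges ∧ M.MovesEnd M' b c := by
  have hperm : (l.reverse ++ a :: m).Perm (l ++ a :: m) := (List.reverse_perm l).append_right _
  refine ⟨?_, hR.card_eq, fun hM => hR.isSimple
    ⟨by simp, hperm.nodup_iff.2 (hM.nodup hR.hasPath_left)⟩ hM,
    hR.isNontrivial hperm.length_eq.ge, fun v => ?_⟩
  · have := hR.edges_add
    rw [pathEdges_append_cons hc, pathEdges_append_cons (x := b) (by simpa), pathEdges_reverse,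
      Multiset.add_cons, Multiset.add_cons, ← Multiset.cons_add, ← Multiset.cons_add] at this
    exact add_right_cancel this
  · have := hR.endCount_add v
    simp only [pathEndCount, List.head?_append, List.head?_reverse, List.getLast?_append,
      List.getLast?_cons, hb, hc, Option.some_or, Option.some.injEq, eq_comm (b := v)] at this
    omega

/-- The edge `ab` is inserted by switching along the chain: the first path `b … c a …` gives up
`ca` in exchange for `ba`, and then `ac` has to be inserted. -/
theorem HasChain.exists_movesEnd {M : PathSystem V} (hM : M.IsSimple) {a b : V} {n : ℕ}
    (h : M.HasChain a n b) (hab : (s(a, b) ::ₘ M.edges).Nodup) :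
    ∃ M', M'.edges = s(a, b) ::ₘ M.edges ∧ M.MovesEnd M' b a := by
  induction n generalizing M b with
  | zero =>
    obtain ⟨h⟩ := h
    exact h.exists_movesEnd hM
  | succ n ih =>
    obtain _ | @⟨_, _, c, hbc, hc⟩ := h
    have hab' := (Multiset.nodup_cons.1 hab).1
    have hcb : c ≠ b := fun hcb => hab' (hcb ▸ hbc.edge_mem)
    obtain ⟨l, m, hp, hlb, hlc⟩ := hbc
    obtain ⟨M₁, hR⟩ := hp.exists_replaces (l.reverse ++ a :: m)
    obtain ⟨hE₁, hmove₁⟩ := hR.movesEnd_reverse hlb hlc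
    obtain ⟨M', hE', hmove'⟩ := ih (hmove₁.isSimple hM)
      (hc.of_replaces_reverse hM hR hlb hab' hcb) (hE₁ ▸ hab)
    exact ⟨M', hE'.trans hE₁, hmove₁.trans hmove'⟩

/-- Passing from a path end to the vertex through which its path enters `a` is injective, and it
never leads into `S`. Hence there are at most `#B` vertices of `S` without a chain. -/
theorem exists_hasChain {M : PathSystem V} (hM : M.IsSimple) (hE : M.edges.Nodup) {a : V}
    {N S B : Finset V} (haN : a ∉ N) (hN : ∀ v, s(a, v) ∈ M.edges → v ∈ N) (hSN : S ⊆ N)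
    (hS : ∀ v ∈ S, s(a, v) ∉ M.edges) (hB : ∀ v ∈ N, v ∉ B → 0 < M.endCount v)
    (hcard : B.card < S.card) : ∃ b ∈ S, ∃ n, M.HasChain a n b := by
  classical
  by_contra! hno
  let T := N.filter fun v => ∀ n, ¬ M.HasChain a n v
  have hST : S ⊆ T := fun v hv => Finset.mem_filter.2 ⟨hSN hv, hno v hv⟩
  have hentry : ∀ v ∈ T \ B, ∃ d ∈ T \ S, M.EntersVia a v d := by
    intro v hv
    obtain ⟨⟨hvN, hvT⟩, hvB⟩ : (v ∈ N ∧ ∀ n, ¬ M.HasChain a n v) ∧ v ∉ B := by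
      simpa [T] using hv
    obtain ⟨p, hp, hpv⟩ := exists_hasPath_of_endCount_pos (hB v hvN hvB)
    rcases hp.entersVia_or_avoidsFrom hpv (ne_of_mem_of_not_mem hvN haN) with ⟨d, hd⟩ | h
    · have hdT : d ∈ T :=
        Finset.mem_filter.2 ⟨hN d hd.edge_mem, fun n h => hvT _ (.of_entersVia hd h)⟩
      exact ⟨d, Finset.mem_sdiff.2 ⟨hdT, fun hdS => hS d hdS hd.edge_mem⟩, hd⟩
    · exact (hvT 0 (.of_avoidsFrom h)).elim
  choose! d hdT hd using hentry
  have hinj : Set.InjOn d (T \ B : Finset V) := fun v hv w hw hvw =>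
    (hd v hv).left_unique hM hE (hvw ▸ hd w hw)
  have hle := Finset.card_le_card_of_injOn d hdT hinj
  have := Finset.le_card_sdiff B T
  have := Finset.card_sdiff_add_card_eq_card hST
  omega

end Ends

/-- The paths of `M` are edge-disjoint, and their edges are precisely the edges of `G`. In contrast
to `PathDecomp`, trivial paths are allowed. -/
structure Decomposes (M : PathSystem V) (G : SimpleGraph V) : Prop where
  isSimple : M.IsSimple
  nodup : M.edges.Nodup
  mem_edges (e : Sym2 V) : e ∈ M.edges ↔ e ∈ G.edgeSet

namespace Decomposes

variable [DecidableEq V] {M : PathSystem V} {G : SimpleGraph V} {a : V} {S : Finset V}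

theorem of_edges_eq_cons {M' : PathSystem V} {b : V} (h : M.Decomposes (deleteStar G a S))
    (hb : b ∈ S) (hab : G.Adj a b) (hM' : M'.IsSimple) (hE : M'.edges = s(a, b) ::ₘ M.edges) :
    M'.Decomposes (deleteStar G a (S.erase b)) where
  isSimple := hM'
  nodup := by
    rw [hE, Multiset.nodup_cons, h.mem_edges]
    exact ⟨fun hmem => (deleteStar_adj_center.1 hmem).2 hb, h.nodup⟩
  mem_edges e := by
    rw [hE, Multiset.mem_cons, mem_edgeSet_deleteStar_erase hb hab, h.mem_edges]

theorem exists_add_star (h : M.Decomposes (deleteStar G a S)) (hM : M.IsNontrivial)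
    (hS : ∀ v ∈ S, G.Adj a v) : ∃ M' : PathSystem V, M'.Decomposes G ∧ M'.IsNontrivial ∧
      M'.card = M.card + S.card ∧ M'.endCount a = M.endCount a + S.card := by
  induction hn : S.card generalizing S M with
  | zero =>
    rw [Finset.card_eq_zero.1 hn, deleteStar_empty] at h
    exact ⟨M, h, hM, rfl, rfl⟩
  | succ n ih =>
    obtain ⟨b, hb⟩ : S.Nonempty := Finset.card_pos.1 (by omega)
    have hab := (hS b hb).ne
    have hstep : Decomposes ([a, b] ::ₘ M) (deleteStar G a (S.erase b)) :=
      h.of_edges_eq_cons hb (hS b hb)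
        (Multiset.forall_mem_cons.2 ⟨by simp [hab], h.isSimple⟩) (by simp [pathEdges])
    obtain ⟨M', hM', hnt, hcard, hends⟩ := ih hstep
      (Multiset.forall_mem_cons.2 ⟨by simp, hM⟩) (fun v hv => hS v (Finset.mem_of_mem_erase hv))
      (by rw [Finset.card_erase_of_mem hb, hn, Nat.add_sub_cancel])
    refine ⟨M', hM', hnt, ?_, ?_⟩
    · rw [hcard, Multiset.card_cons]; omega
    · rw [hends, endCount_cons]
      have : pathEndCount [a, b] a = 1 := by simp [pathEndCount, hab.symm]
      omega

theorem exists_insert_edge [Finite V] {B : Finset V} (h : M.Decomposes (deleteStar G a S))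
    (hS : ∀ v ∈ S, G.Adj a v) (hB : ∀ v, G.Adj a v → v ∉ B → 0 < M.endCount v)
    (hcard : B.card < S.card) : ∃ b ∈ S, ∃ M' : PathSystem V,
      M'.Decomposes (deleteStar G a (S.erase b)) ∧ M.MovesEnd M' b a := by
  have hadj {v : V} : s(a, v) ∈ M.edges ↔ (deleteStar G a S).Adj a v := h.mem_edges _
  have hfin : (G.neighborSet a).Finite := Set.toFinite _
  have hS_not_mem : ∀ v ∈ S, s(a, v) ∉ M.edges :=
    fun v hv hmem => (deleteStar_adj_center.1 (hadj.1 hmem)).2 hv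
  obtain ⟨b, hb, n, hchain⟩ := exists_hasChain h.isSimple h.nodup (N := hfin.toFinset)
    (by simp) (fun v hv => hfin.mem_toFinset.2 (deleteStar_adj_center.1 (hadj.1 hv)).1)
    (fun v hv => hfin.mem_toFinset.2 (hS v hv)) hS_not_mem
    (fun v hv => hB v (hfin.mem_toFinset.1 hv)) hcard
  obtain ⟨M', hE, hmove⟩ :=
    hchain.exists_movesEnd h.isSimple (Multiset.nodup_cons.2 ⟨hS_not_mem b hb, h.nodup⟩)
  exact ⟨b, hb, M', h.of_edges_eq_cons hb (hS b hb) (hmove.isSimple h.isSimple) hE, hmove⟩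

/-- Every inserted edge may exhaust the path ends at one neighbour of `a`, so that about half of
the star can be inserted. -/
theorem exists_insert_half_star [Finite V] {B : Finset V} (h : M.Decomposes (deleteStar G a S))
    (hM : M.IsNontrivial) (hS : ∀ v ∈ S, G.Adj a v)
    (hB : ∀ v, G.Adj a v → v ∉ B → 0 < M.endCount v) : ∃ S' ⊆ S, 2 * S'.card ≤ S.card + B.card ∧
      ∃ M' : PathSystem V, M'.Decomposes (deleteStar G a S') ∧ M'.IsNontrivial ∧
        M'.card = M.card ∧ M'.endCount a + S'.card = M.endCount a + S.card := by
  induction hn : S.card generalizing S B M with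
  | zero => exact ⟨S, subset_rfl, by omega, M, h, hM, rfl, by omega⟩
  | succ n ih =>
    rcases le_or_gt S.card B.card with hle | hlt
    · exact ⟨S, subset_rfl, by omega, M, h, hM, rfl, by omega⟩
    obtain ⟨b, hb, M₁, h₁, hmove⟩ := h.exists_insert_edge hS hB hlt
    have hends : ∀ v, G.Adj a v → v ∉ insert b B → 0 < M₁.endCount v := by
      intro v hv hvB
      obtain ⟨hvb, hvB⟩ : v ≠ b ∧ v ∉ B := by simpa using hvB
      have := hmove.endCount_add v
      have := hB v hv hvB
      simp only [hvb, if_false] at *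
      omega
    have hcard := Finset.card_erase_of_mem hb
    obtain ⟨S', hS', hhalf, M', h', hM', hcard', hend'⟩ := ih h₁ (hmove.isNontrivial hM)
      (fun v hv => hS v (Finset.mem_of_mem_erase hv)) hends (by omega)
    refine ⟨S', hS'.trans (Finset.erase_subset _ _), ?_, M', h', hM',
      hcard'.trans hmove.card_eq, ?_⟩
    · have := Finset.card_insert_le b B
      omega
    · have := hmove.endCount_add a
      have hab := (hS b hb).ne
      simp only [hab, if_true, if_false] at this
      omega

end Decomposes

section OneEven

variable [DecidableEq V] {G : SimpleGraph V}

/-- `G` has a decomposition with `h v` or `h v + 1` path ends at every vertex `v`, according to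
whether `ndeg G v + h v` is even or odd. One may think of `h v` as a number of imaginary pendant
edges at `v`. -/
def HasParityDecomposition (G : SimpleGraph V) (h : V → ℕ) : Prop :=
  ∃ M : PathSystem V, M.Decomposes G ∧ ∀ v, M.endCount v = h v + (ndeg G v + h v) % 2

theorem hasParityDecomposition_bot [Finite V] (h : V → ℕ) : HasParityDecomposition ⊥ h := by
  have := Fintype.ofFinite V
  let M : PathSystem V := Finset.univ.val.bind fun v => .replicate ((h v + 1) / 2) [v]
  have hM : ∀ p ∈ M, ∃ v, p = [v] := fun p hp => by
    obtain ⟨v, -, hv⟩ := Multiset.mem_bind.1 hp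
    exact ⟨v, Multiset.eq_of_mem_replicate hv⟩
  have hE : M.edges = 0 := Multiset.sum_eq_zero fun x hx => by
    obtain ⟨p, hp, rfl⟩ := Multiset.mem_map.1 hx
    obtain ⟨v, rfl⟩ := hM p hp
    rfl
  refine ⟨M, ⟨fun p hp => ?_, by simp [hE], by simp [hE]⟩, fun v => ?_⟩
  · obtain ⟨v, rfl⟩ := hM p hp
    simp
  · have hdeg : ndeg (⊥ : SimpleGraph V) v = 0 := by simp [ndeg]
    have : M.endCount v = ∑ w, (h w + 1) / 2 * pathEndCount [w] v := by
      simp [M, endCount, Multiset.map_bind, Multiset.sum_bind]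
    rw [this, hdeg, Finset.sum_eq_single v (by simp +contextual [pathEndCount]) (by simp)]
    simp only [pathEndCount, List.head?_cons, List.getLast?_singleton, if_true]
    omega

theorem HasParityDecomposition.of_deleteStar_singleton [Finite V] {h : V → ℕ} {c z : V}
    (hzc : G.Adj z c) (hc : Even (ndeg G c + h c))
    (hodd : ∀ v, v ≠ c → 0 < ndeg G v → Odd (ndeg G v + h v))
    (hG : HasParityDecomposition (deleteStar G z {c}) h) : HasParityDecomposition G h := by
  obtain ⟨M, hM, hends⟩ := hG
  have hS : ∀ v ∈ ({c} : Finset V), G.Adj z v := by simpa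
  have hpos : ∀ v, G.Adj z v → 0 < M.endCount v := fun v hzv => by
    have := Nat.odd_iff.1 (odd_ndeg_deleteStar_singleton hzc hc
      (fun hvc => hodd v hvc (ndeg_pos_iff.2 ⟨z, hzv.symm⟩)) hzv.ne')
    have := hends v
    omega
  obtain ⟨b, hb, M', hM', hmove⟩ :=
    hM.exists_insert_edge (B := ∅) hS (fun v hzv _ => hpos v hzv) (by simp)
  obtain rfl := Finset.mem_singleton.1 hb
  refine ⟨M', by simpa using hM', fun v => ?_⟩
  have hend := hmove.endCount_add v
  rw [hends v] at hend
  rcases eq_or_ne v z with rfl | hvz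
  · have hdeg : ndeg (deleteStar G v {b}) v + 1 = ndeg G v := ndeg_deleteStar_center hS
    have := Nat.odd_iff.1 (hodd v hzc.ne (by omega))
    simp only [hzc.ne, if_true, if_false] at hend
    omega
  have hdeg := ndeg_deleteStar_of_ne hS hvz
  rcases eq_or_ne v b with rfl | hvb
  · have := Nat.even_iff.1 hc
    simp only [Finset.mem_singleton, hvz, if_true, if_false] at hend hdeg
    omega
  · simp only [Finset.mem_singleton, hvz, hvb, if_false, add_zero] at hend hdeg
    rw [hend, hdeg]

/-- If there is no even vertex to start from, then one more pendant edge produces one. -/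
theorem hasParityDecomposition_of_forall_ne_odd [Finite V] (h : V → ℕ) (c : V)
    (hodd : ∀ v, v ≠ c → 0 < ndeg G v → Odd (ndeg G v + h v)) :
    HasParityDecomposition G h := by
  induction G using WellFoundedLT.induction generalizing h c with
  | ind G ih =>
    have heven {h : V → ℕ} {c : V} (hc : Even (ndeg G c + h c)) (hpos : 0 < ndeg G c)
        (hodd : ∀ v, v ≠ c → 0 < ndeg G v → Odd (ndeg G v + h v)) :
        HasParityDecomposition G h := by
      obtain ⟨z, hcz⟩ := ndeg_pos_iff.1 hpos
      refine .of_deleteStar_singleton hcz.symm hc hodd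
        (ih _ (deleteStar_lt (by simp) hcz.symm) h z fun v hvz hv => ?_)
      have hdeg := ndeg_deleteStar_of_ne (S := {c}) (by simpa using hcz.symm) hvz
      exact odd_ndeg_deleteStar_singleton hcz.symm hc (fun hvc => hodd v hvc (by omega)) hvz
    by_cases hc : 0 < ndeg G c ∧ Even (ndeg G c + h c)
    · exact heven hc.2 hc.1 hodd
    have hodd_all : ∀ v, 0 < ndeg G v → Odd (ndeg G v + h v) := fun v hpos => by
      rcases eq_or_ne v c with rfl | hvc
      · exact Nat.not_even_iff_odd.1 fun hv => hc ⟨hpos, hv⟩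
      · exact hodd v hvc hpos
    by_cases hG : ∃ x, 0 < ndeg G x
    · obtain ⟨x, hx⟩ := hG
      have hx_odd := hodd_all x hx
      obtain ⟨M, hM, hends⟩ := heven (h := Function.update h x (h x + 1)) (c := x)
        (by simpa [← add_assoc] using hx_odd.add_one) hx
        (fun v hv hpos => by simpa [hv] using hodd_all v hpos)
      refine ⟨M, hM, fun v => (hends v).trans ?_⟩
      rcases eq_or_ne v x with rfl | hvx
      · rw [Nat.odd_iff] at hx_odd
        simp only [Function.update_self]
        omega
      · simp [hvx]
    · simp only [not_exists, Nat.pos_iff_ne_zero, not_not] at hG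
      have hbot : G = ⊥ := by
        ext v w
        simpa using fun hvw => (ndeg_pos_iff.2 ⟨w, hvw⟩).ne' (hG v)
      subst hbot
      exact hasParityDecomposition_bot h

theorem IsSimple.sum_endCount [Fintype V] {M : PathSystem V} (hM : M.IsSimple) :
    ∑ v, M.endCount v = 2 * M.card := by
  induction M using Multiset.induction_on with
  | empty => simp [endCount]
  | cons p M ih =>
    obtain ⟨hp, hM⟩ := Multiset.forall_mem_cons.1 hM
    simp only [endCount_cons, Finset.sum_add_distrib, sum_pathEndCount hp.1, ih hM,
      Multiset.card_cons]
    omega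

theorem IsSimple.isNontrivial {M : PathSystem V} (hM : M.IsSimple)
    (hends : ∀ v, M.endCount v < 2) : M.IsNontrivial := by
  intro p hp
  match p, hM p hp with
  | [v], _ =>
    obtain ⟨N, rfl⟩ := Multiset.exists_cons_of_mem hp
    have := hends v
    simp only [endCount_cons, pathEndCount, List.head?_cons, List.getLast?_singleton,
      if_true] at this
    omega
  | _ :: _ :: _, _ => simp

theorem exists_decomposes_of_unique_even [Fintype V] {c : V}
    (hc : ∀ v, Even (ndeg G v) ↔ v = c) :
    ∃ M : PathSystem V, M.Decomposes G ∧ M.IsNontrivial ∧ 2 * M.card + 1 = Fintype.card V ∧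
      ∀ v, M.endCount v = if v = c then 0 else 1 := by
  obtain ⟨M, hM, hends⟩ := hasParityDecomposition_of_forall_ne_odd (G := G) (fun _ => 0) c
    fun v hv _ => Nat.not_even_iff_odd.1 (mt (hc v).1 hv)
  replace hends : ∀ v, M.endCount v = if v = c then 0 else 1 := fun v => by
    have := hc v
    rw [hends v]
    split_ifs with hvc
    · simpa [hvc, Nat.even_iff] using this
    · simpa [hvc, Nat.odd_iff] using this
  refine ⟨M, hM, hM.isSimple.isNontrivial fun v => by rw [hends]; split_ifs <;> simp, ?_, hends⟩
  rw [← hM.isSimple.sum_endCount, Finset.sum_congr rfl fun v _ => hends v, Finset.sum_ite,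
    Finset.sum_const_zero, zero_add, Finset.sum_const, smul_eq_mul, mul_one,
    Finset.filter_ne', Finset.card_erase_add_one (Finset.mem_univ c), Finset.card_univ]

end OneEven

section EvenVertices

variable [DecidableEq V] {G : SimpleGraph V} {u : V}

theorem exists_decomposes_of_deleteStar [Fintype V] {S B : Finset V} {c : V}
    (hS : ∀ v ∈ S, G.Adj u v) (hc : ∀ v, Even (ndeg (deleteStar G u S) v) ↔ v = c)
    (hB : G.Adj u c → c ∈ B) :
    ∃ M : PathSystem V, M.Decomposes G ∧ M.IsNontrivial ∧
      M.card + 1 ≤ (Fintype.card V + 1) / 2 + (S.card + B.card) / 2 ∧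
      M.endCount u = S.card + if u = c then 0 else 1 := by
  obtain ⟨M, hM, hnt, hcard, hends⟩ := exists_decomposes_of_unique_even hc
  obtain ⟨S', hS', hhalf, M', hM', hnt', hcard', hend'⟩ :=
    hM.exists_insert_half_star (B := B) hnt hS fun v huv hvB => by
      rw [hends, if_neg (by rintro rfl; exact hvB (hB huv))]
      exact one_pos
  obtain ⟨M'', hM'', hnt'', hcard'', hend''⟩ := hM'.exists_add_star hnt' fun v hv => hS v (hS' hv)
  have := hends u
  exact ⟨M'', hM'', hnt'', by omega, by omega⟩

theorem exists_decomposes_of_even [Fintype V] {E : Finset V}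
    (hE : ∀ v, v ∈ E ↔ Even (ndeg G v)) (hcard : E.card = 3) {b : V}
    (hu : u ∈ E) (hb : b ∈ E) (hub : G.Adj u b) :
    ∃ M : PathSystem V, M.Decomposes G ∧ M.IsNontrivial ∧
      M.card ≤ (Fintype.card V + 1) / 2 ∧ M.endCount u = 2 := by
  have hbu : b ∈ E.erase u := Finset.mem_erase.2 ⟨hub.ne', hb⟩
  obtain ⟨c, hc⟩ : ∃ c, (E.erase u).erase b = {c} := Finset.card_eq_one.1 (by
    rw [Finset.card_erase_of_mem hbu, Finset.card_erase_of_mem hu, hcard])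
  have hmem : ∀ v, v = c ↔ v ≠ b ∧ v ≠ u ∧ v ∈ E := fun v => by
    rw [← Finset.mem_singleton, ← hc, Finset.mem_erase, Finset.mem_erase]
  have huc : u ≠ c := fun h => ((hmem u).1 h).2.1 rfl
  have hS : ∀ v ∈ ({b} : Finset V), G.Adj u v := by simpa
  have hunique : ∀ v, Even (ndeg (deleteStar G u {b}) v) ↔ v = c := fun v => by
    rcases eq_or_ne v u with rfl | hvu
    · simp [even_ndeg_deleteStar_center hS, (hE v).1 hu, huc]
    · rw [even_ndeg_deleteStar_of_ne hE (by simpa) hS hvu, hmem, Finset.mem_singleton]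
      tauto
  obtain ⟨M, hM, hnt, hle, hend⟩ := exists_decomposes_of_deleteStar (B := {c}) hS hunique (by simp)
  refine ⟨M, hM, hnt, ?_, by simpa [huc] using hend⟩
  simp only [Finset.card_singleton] at hle
  omega

theorem exists_unique_even_deleteStar [Finite V] [DecidableRel G.Adj] {E : Finset V}
    (hE : ∀ v, v ∈ E ↔ Even (ndeg G v)) (hcard : E.card = 3) (hu : u ∉ E)
    (h2 : 2 ≤ (E.filter (G.Adj u)).card) :
    ∃ c, (∀ v, Even (ndeg (deleteStar G u (E.filter (G.Adj u))) v) ↔ v = c) ∧ ¬ G.Adj u c ∧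
      (E.filter (G.Adj u)).card + (if u = c then 0 else 1) = 3 := by
  set S := E.filter (G.Adj u)
  have hSE : S ⊆ E := Finset.filter_subset _ _
  have hS : ∀ v ∈ S, G.Adj u v := fun v hv => (Finset.mem_filter.1 hv).2
  have hu_odd := (hE u).not.1 hu
  have hle3 : S.card ≤ 3 := hcard ▸ Finset.card_le_card hSE
  obtain hS2 | hS3 : S.card = 2 ∨ S.card = 3 := by omega
  · obtain ⟨c, hc⟩ : ∃ c, E \ S = {c} := Finset.card_eq_one.1 (by
      have := Finset.card_sdiff_add_card_eq_card hSE
      omega)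
    have hmem : ∀ v, v ∈ E ∧ v ∉ S ↔ v = c := fun v => by
      rw [← Finset.mem_sdiff, hc, Finset.mem_singleton]
    obtain ⟨hcE, hcS⟩ := (hmem c).2 rfl
    have huc : u ≠ c := (ne_of_mem_of_not_mem hcE hu).symm
    refine ⟨c, fun v => ?_, fun h => hcS (Finset.mem_filter.2 ⟨hcE, h⟩), by simp [huc, hS2]⟩
    rcases eq_or_ne v u with rfl | hvu
    · simp [even_ndeg_deleteStar_center hS, hS2, hu_odd, huc]
    · rw [even_ndeg_deleteStar_of_ne hE hSE hS hvu, hmem]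
  · refine ⟨u, fun v => ?_, by simp, by simp [hS3]⟩
    have hSE' : S = E := Finset.eq_of_subset_of_card_le hSE (hcard.trans hS3.symm).le
    rcases eq_or_ne v u with rfl | hvu
    · simp [even_ndeg_deleteStar_center hS, hS3, hu_odd, Nat.not_even_iff_odd.2 (by decide : Odd 3)]
    · rw [even_ndeg_deleteStar_of_ne hE hSE hS hvu, hSE']
      simp [hvu]

theorem exists_decomposes_of_odd [Fintype V] {E : Finset V}
    (hE : ∀ v, v ∈ E ↔ Even (ndeg G v)) (hcard : E.card = 3) (hu : u ∉ E) {b c : V}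
    (hbc : b ≠ c) (hb : b ∈ E) (hc : c ∈ E) (hub : G.Adj u b) (huc : G.Adj u c) :
    ∃ M : PathSystem V, M.Decomposes G ∧ M.IsNontrivial ∧
      M.card ≤ (Fintype.card V + 1) / 2 ∧ M.endCount u = 3 := by
  classical
  have h2 : 2 ≤ (E.filter (G.Adj u)).card :=
    Finset.one_lt_card.2
    ⟨b, Finset.mem_filter.2 ⟨hb, hub⟩, c, Finset.mem_filter.2 ⟨hc, huc⟩, hbc⟩
  obtain ⟨d, hd, hud, h3⟩ := exists_unique_even_deleteStar hE hcard hu h2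
  obtain ⟨M, hM, hnt, hle, hend⟩ := exists_decomposes_of_deleteStar (B := ∅)
    (fun v hv => (Finset.mem_filter.1 hv).2) hd fun h => (hud h).elim
  refine ⟨M, hM, hnt, ?_, hend.trans h3⟩
  simp only [Finset.card_empty] at hle
  omega

end EvenVertices

section Walks

variable {G : SimpleGraph V}

theorem coe_edges_eq_pathEdges {a b : V} (w : G.Walk a b) :
    (w.edges : Multiset (Sym2 V)) = pathEdges w.support := by
  induction w with
  | nil => rfl
  | cons h w ih =>
    rw [Walk.edges_cons, Walk.support_cons, ← Multiset.cons_coe, ih]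
    cases w <;> rfl

theorem exists_walk_support_eq (l : List V) (x : V)
    (h : ∀ e ∈ pathEdges (x :: l), e ∈ G.edgeSet) :
    ∃ (b : V) (w : G.Walk x b), w.support = x :: l := by
  induction l generalizing x with
  | nil => exact ⟨x, .nil, rfl⟩
  | cons y l ih =>
    obtain ⟨hxy, hl⟩ := Multiset.forall_mem_cons.1 h
    obtain ⟨b, w, hw⟩ := ih y hl
    exact ⟨b, .cons (G.mem_edgeSet.1 hxy) w, by rw [Walk.support_cons, hw]⟩

/-- The path system formed by the supports of the walks in `L`. -/
def ofWalks (L : List (Σ a b : V, G.Walk a b)) : PathSystem V := L.map fun w => w.2.2.support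

@[simp]
theorem ofWalks_cons (w : Σ a b : V, G.Walk a b) (L : List (Σ a b : V, G.Walk a b)) :
    ofWalks (w :: L) = w.2.2.support ::ₘ ofWalks L := rfl

theorem IsSimple.exists_ofWalks_eq {M : PathSystem V} (hM : M.IsSimple)
    (h : ∀ e ∈ M.edges, e ∈ G.edgeSet) :
    ∃ L : List (Σ a b : V, G.Walk a b), ofWalks L = M := by
  induction M using Multiset.induction with
  | empty => exact ⟨[], rfl⟩
  | cons p M ih =>
    simp only [edges_cons, Multiset.mem_add, or_imp, forall_and] at h
    obtain ⟨⟨hp, -⟩, hM⟩ := Multiset.forall_mem_cons.1 hM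
    obtain ⟨L, rfl⟩ := ih hM h.2
    obtain ⟨x, l, rfl⟩ := List.exists_cons_of_ne_nil hp
    obtain ⟨b, w, hw⟩ := exists_walk_support_eq l x h.1
    exact ⟨⟨x, b, w⟩ :: L, by simp [hw]⟩

theorem edges_ofWalks (L : List (Σ a b : V, G.Walk a b)) :
    (ofWalks L).edges = (L.flatMap fun w => w.2.2.edges : List (Sym2 V)) := by
  induction L with
  | nil => rfl
  | cons w L ih =>
    rw [ofWalks_cons, edges_cons, ih, List.flatMap_cons, ← Multiset.coe_add,
      coe_edges_eq_pathEdges]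

theorem endCount_ofWalks [DecidableEq V] (L : List (Σ a b : V, G.Walk a b))
    (hL : ∀ w ∈ L, w.1 ≠ w.2.1) (v : V) :
    (ofWalks L).endCount v = (L.filter fun w => w.1 = v ∨ w.2.1 = v).length := by
  induction L with
  | nil => rfl
  | cons w L ih =>
    obtain ⟨hw, hL⟩ := List.forall_mem_cons.1 hL
    have hends : pathEndCount w.2.2.support v = if w.1 = v ∨ w.2.1 = v then 1 else 0 := by
      simp only [pathEndCount, List.head?_eq_some_head w.2.2.support_ne_nil, Walk.head_support,
        List.getLast?_eq_some_getLast w.2.2.support_ne_nil, Walk.getLast_support,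
        Option.some.injEq]
      aesop
    rw [ofWalks_cons, endCount_cons, ih hL, hends, List.filter_cons]
    simp only [decide_eq_true_eq]
    split_ifs <;> simp [add_comm]

theorem Decomposes.exists_pathDecomp [DecidableEq V] {M : PathSystem V} (hM : M.Decomposes G)
    (hnt : M.IsNontrivial) :
    ∃ D : PathDecomp G, pdCard D = M.card ∧ ∀ v, ends D v = M.endCount v := by
  obtain ⟨L, rfl⟩ := hM.isSimple.exists_ofWalks_eq fun e he => (hM.mem_edges e).1 he
  have hmem : ∀ w ∈ L, w.2.2.support ∈ ofWalks L := fun w hw =>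
    List.mem_map.2 ⟨w, hw, rfl⟩
  have hlen : ∀ w ∈ L, 0 < w.2.2.length := fun w hw => by
    have := hnt _ (hmem w hw)
    rw [Walk.length_support] at this
    omega
  have hpath : ∀ w ∈ L, w.2.2.IsPath := fun w hw =>
    (Walk.isPath_def _).2 (hM.isSimple _ (hmem w hw)).2
  have hends : ∀ w ∈ L, w.1 ≠ w.2.1 := by
    rintro ⟨a, b, w⟩ hw hab
    obtain rfl : a = b := hab
    exact (hlen _ hw).ne' (Walk.length_eq_zero_iff.2 (Walk.isPath_iff_nil.1 (hpath _ hw)))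
  have hnodup := hM.nodup
  rw [edges_ofWalks, Multiset.coe_nodup] at hnodup
  refine ⟨⟨L, hlen, hpath, (List.nodup_flatMap.1 hnodup).2.imp fun h e he he' => h he he',
    fun e he => ?_⟩, (List.length_map _).symm, fun v => (endCount_ofWalks L hends v).symm⟩
  rw [← List.mem_flatMap, ← Multiset.mem_coe, ← edges_ofWalks]
  exact (hM.mem_edges e).2 he

end Walks

end PathSystem

namespace IsSETGraph

variable {G : SimpleGraph V}

theorem ncard_even (h : IsSETGraph G) : {v | Even (ndeg G v)}.ncard = 3 := by
  obtain ⟨⟨a, b, c, hab, hac, hbc, heven, -⟩, -⟩ := h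
  exact heven ▸ Set.ncard_eq_three.2 ⟨a, b, c, hab, hac, hbc, rfl⟩

theorem one_lt_ncard_even_closedNeighbors [Finite V] (h : IsSETGraph G) (u : V) :
    1 < {v | Even (ndeg G v) ∧ (v = u ∨ G.Adj u v)}.ncard := by
  obtain ⟨⟨a, b, c, -, -, -, heven, hab, hac, -⟩, hodd⟩ := h
  have hmem : ∀ v, Even (ndeg G v) ↔ v = a ∨ v = b ∨ v = c := Set.ext_iff.1 heven
  rw [Set.one_lt_ncard_iff (Set.toFinite _)]
  by_cases hu : Even (ndeg G u)
  · obtain ⟨w, hw, huw⟩ : ∃ w, Even (ndeg G w) ∧ G.Adj u w := by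
      rcases (hmem u).1 hu with rfl | rfl | rfl
      exacts [⟨b, by simp [hmem], hab⟩, ⟨a, by simp [hmem], hab.symm⟩,
        ⟨a, by simp [hmem], hac.symm⟩]
    exact ⟨u, w, ⟨hu, .inl rfl⟩, ⟨hw, .inr huw⟩, huw.ne⟩
  · obtain ⟨x, y, hxy, hux, huy, hx, hy⟩ := hodd u (Nat.not_even_iff_odd.1 hu)
    exact ⟨x, y, ⟨hx, .inr hux⟩, ⟨hy, .inr huy⟩, hxy⟩

end IsSETGraph

theorem set_graph_special_decomposition_general [Fintype V] [DecidableEq V]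
    (K : SimpleGraph V) (hE : {v | Even (ndeg K v)}.ncard = 3) (u : V)
    (hu : 1 < {v | Even (ndeg K v) ∧ (v = u ∨ K.Adj u v)}.ncard) :
    ∃ D : PathDecomp K, 2 ≤ ends D u ∧ pdCard D ≤ (Fintype.card V + 1) / 2 := by
  obtain ⟨E, hEK⟩ : ∃ E : Finset V, E = {v | Even (ndeg K v)} := (Set.toFinite _).exists_finset_coe
  have hmem : ∀ v, v ∈ E ↔ Even (ndeg K v) := Set.ext_iff.1 hEK
  rw [← hEK, Set.ncard_coe_finset] at hE
  obtain ⟨x, y, ⟨hx, hxu⟩, ⟨hy, hyu⟩, hxy⟩ := (Set.one_lt_ncard_iff (Set.toFinite _)).1 hu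
  rw [← hmem] at hx hy
  obtain ⟨M, hM, hnt, hle, hends⟩ : ∃ M : PathSystem V, M.Decomposes K ∧ M.IsNontrivial ∧
      M.card ≤ (Fintype.card V + 1) / 2 ∧ 2 ≤ M.endCount u := by
    by_cases huE : u ∈ E
    · obtain ⟨w, hw, huw⟩ : ∃ w ∈ E, K.Adj u w := by
        rcases hxu with rfl | hux
        exacts [⟨y, hy, hyu.resolve_left hxy.symm⟩, ⟨x, hx, hux⟩]
      obtain ⟨M, hM, hnt, hle, hend⟩ := PathSystem.exists_decomposes_of_even hmem hE huE hw huw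
      exact ⟨M, hM, hnt, hle, hend.ge⟩
    · obtain ⟨M, hM, hnt, hle, hend⟩ := PathSystem.exists_decomposes_of_odd hmem hE huE hxy hx hy
        (hxu.resolve_left (ne_of_mem_of_not_mem hx huE))
        (hyu.resolve_left (ne_of_mem_of_not_mem hy huE))
      exact ⟨M, hM, hnt, hle, by omega⟩
  obtain ⟨D, hDcard, hDends⟩ := hM.exists_pathDecomp hnt
  exact ⟨D, by rwa [hDends], by rwa [hDcard]⟩

theorem set_graph_special_decomposition [Fintype V] [DecidableEq V]
    (K : SimpleGraph V) (h : IsSETGraph K) (u : V) :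
    ∃ D : PathDecomp K, 2 ≤ ends D u ∧ pdCard D ≤ (Fintype.card V + 1) / 2 :=
  set_graph_special_decomposition_general K h.ncard_even u (h.one_lt_ncard_even_closedNeighbors u)
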